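/- Let T = ⋃_{k=1}^L Tₖ be a compact set, where each Tₖ = { x ∈ ℝⁿ : fᵏ₁(x) ≥ 0, …, fᵏ_{mₖ}(x) ≥ 0 } is defined by real polynomials fᵏᵢ. Suppose that for every u ∈ ∂_cT and every pair (k, i) with fᵏᵢ(u) = 0: (1) Tₖ has nonempty interior near u, i.e., for every δ > 0 there exists v ∈ B(u, δ) with fᵏⱼ(v) > 0 for all j = 1, …, mₖ; and (2) fᵏᵢ is either sos-concave or strictly quasi-concave at u. Then conv(T) is SDP representable. -/

import Mathlib

open MvPolynomial Metric Set Pointwise Filter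

noncomputable section

/-- `ℝⁿ` with the Euclidean norm. -/
abbrev Rn (n : ℕ) : Type := EuclideanSpace ℝ (Fin n)

/-- A set `S ⊆ ℝⁿ` is SDP representable if it is the projection of a spectrahedron:
there are symmetric matrices `A₀, A i, B j` with
`S = { x | ∃ u, A₀ + Σ xᵢ Aᵢ + Σ uⱼ Bⱼ ⪰ 0 }`. -/
def IsSDPRepresentable {n : ℕ} (S : Set (Rn n)) : Prop :=
  ∃ (N d : ℕ) (A₀ : Matrix (Fin d) (Fin d) ℝ)
    (A : Fin n → Matrix (Fin d) (Fin d) ℝ) (B : Fin N → Matrix (Fin d) (Fin d) ℝ),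
    A₀.IsSymm ∧ (∀ i, (A i).IsSymm) ∧ (∀ j, (B j).IsSymm) ∧
    S = {x : Rn n | ∃ u : Fin N → ℝ,
      (A₀ + ∑ i, x i • A i + ∑ j, u j • B j).PosSemidef}

/-- Evaluation of a polynomial at a point of `ℝⁿ`. -/
def peval {n : ℕ} (g : MvPolynomial (Fin n) ℝ) (x : Rn n) : ℝ :=
  MvPolynomial.eval (fun i => x i) g

/-- The gradient `∇g(u)` of a polynomial. -/
def pgrad {n : ℕ} (g : MvPolynomial (Fin n) ℝ) (u : Rn n) : Fin n → ℝ :=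
  fun i => MvPolynomial.eval (fun j => u j) (MvPolynomial.pderiv i g)

/-- The Hessian `∇²g(u)` of a polynomial. -/
def phess {n : ℕ} (g : MvPolynomial (Fin n) ℝ) (u : Rn n) : Matrix (Fin n) (Fin n) ℝ :=
  Matrix.of fun i j =>
    MvPolynomial.eval (fun k => u k) (MvPolynomial.pderiv i (MvPolynomial.pderiv j g))

/-- A polynomial `g` is sos-concave if `-∇²g(x) = W(x)ᵀ W(x)` for some
(possibly nonsquare) matrix polynomial `W`. -/
def SosConcave {n : ℕ} (g : MvPolynomial (Fin n) ℝ) : Prop :=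
  ∃ (k : ℕ) (W : Fin k → Fin n → MvPolynomial (Fin n) ℝ),
    ∀ i j, - MvPolynomial.pderiv i (MvPolynomial.pderiv j g) = ∑ l, W l i * W l j

/-- `g` is quasi-concave at `u` : `-vᵀ∇²g(u)v ≥ 0` for every `v` with `∇g(u)ᵀv = 0`. -/
def QuasiConcaveAt {n : ℕ} (g : MvPolynomial (Fin n) ℝ) (u : Rn n) : Prop :=
  ∀ v : Fin n → ℝ, (∑ i, pgrad g u i * v i) = 0 →
    0 ≤ -(∑ i, ∑ j, v i * phess g u i j * v j)

/-- `g` is strictly quasi-concave at `u` : if `∇g(u) ≠ 0` then `-vᵀ∇²g(u)v > 0`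
for all nonzero `v ⊥ ∇g(u)`; if `∇g(u) = 0` then `-∇²g(u)` is positive definite. -/
def StrictlyQuasiConcaveAt {n : ℕ} (g : MvPolynomial (Fin n) ℝ) (u : Rn n) : Prop :=
  (pgrad g u ≠ 0 ∧ ∀ v : Fin n → ℝ, v ≠ 0 → (∑ i, pgrad g u i * v i) = 0 →
      0 < -(∑ i, ∑ j, v i * phess g u i j * v j)) ∨
  (pgrad g u = 0 ∧ (-(phess g u)).PosDef)

/-- The convex boundary `∂_c T` : points of `T` minimizing some unit linear functional. -/
def convexBoundary {n : ℕ} (T : Set (Rn n)) : Set (Rn n) :=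
  {u ∈ T | ∃ l : Rn n, ‖l‖ = 1 ∧ ∀ x ∈ T, (∑ i, l i * u i) ≤ ∑ i, l i * x i}

/-- `v` is a nonsingular point of `∂T` (w.r.t. defining polynomials `g`):
exactly one defining polynomial vanishes at `v`, with nonvanishing gradient. -/
def IsNonsingularBoundaryPoint {n m : ℕ} (g : Fin m → MvPolynomial (Fin n) ℝ)
    (T : Set (Rn n)) (v : Rn n) : Prop :=
  v ∈ frontier T ∧ ∃ i, peval (g i) v = 0 ∧ pgrad (g i) v ≠ 0 ∧
    ∀ j, peval (g j) v = 0 → j = i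

/-- A polynomial is SOS if it is a finite sum of squares of polynomials. -/
def IsSOSPoly {n : ℕ} (p : MvPolynomial (Fin n) ℝ) : Prop :=
  ∃ (k : ℕ) (q : Fin k → MvPolynomial (Fin n) ℝ), p = ∑ i, (q i) ^ 2

/-- The polynomial `δ² - ‖x - u‖²`. -/
def ballPoly {n : ℕ} (u : Rn n) (δ : ℝ) : MvPolynomial (Fin n) ℝ :=
  MvPolynomial.C (δ ^ 2) - ∑ i, (MvPolynomial.X i - MvPolynomial.C (u i)) ^ 2

/-- The family `h₁, …, h_{m₂}` extended by the ball polynomial `h_m(x) = δ² - ‖x-u‖²`. -/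
def extFamily {n m2 : ℕ} (h : Fin m2 → MvPolynomial (Fin n) ℝ) (u : Rn n) (δ : ℝ) :
    Fin (m2 + 1) → MvPolynomial (Fin n) ℝ :=
  Fin.snoc h (ballPoly u δ)

/-- The positive definite Lagrange Hessian (PDLH) condition at `u` with radius `δu`,
for the set `T = {x | f(x) = 0, h(x) ≥ 0}`. -/
def PDLHAt {n m1 m2 : ℕ} (f : Fin m1 → MvPolynomial (Fin n) ℝ)
    (h : Fin m2 → MvPolynomial (Fin n) ℝ) (T : Set (Rn n)) (u : Rn n) (δu : ℝ) : Prop :=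
  ∀ l : Rn n, ‖l‖ = 1 → ∀ δ : ℝ, 0 < δ → δ ≤ δu →
    ∀ v ∈ T ∩ closedBall u δ,
      (∀ x ∈ T ∩ closedBall u δ, (∑ i, l i * v i) ≤ ∑ i, l i * x i) →
      ∃ (lam : Fin m1 → ℝ) (mu : Fin (m2 + 1) → ℝ),
        (∀ j, 0 ≤ mu j) ∧
        (∀ j, mu j * peval (extFamily h u δ j) v = 0) ∧
        (∀ i, l i = (∑ k, lam k * pgrad (f k) v i) +
            ∑ j, mu j * pgrad (extFamily h u δ j) v i) ∧
        ∀ x ∈ closedBall u δ,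
          (Matrix.of (fun i i' : Fin n =>
            -(∑ k, lam k * phess (f k) x i i') -
              ∑ j, mu j * phess (extFamily h u δ j) x i i')).PosDef

/-- `Z(g) ∩ ∂S` has strictly convex shape with respect to `S`. -/
def StrictlyConvexShape {n : ℕ} (g : MvPolynomial (Fin n) ℝ) (S : Set (Rn n)) : Prop :=
  ∃ Y U : Set (Rn n), IsOpen U ∧ Y = {x | peval g x = 0} ∩ U ∧
    {x | peval g x = 0} ∩ frontier S ⊆ Y ∧
    (∀ p ∈ closure Y, pgrad g p ≠ 0) ∧
    ∀ p ∈ closure Y,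
      (∃ ε : ℝ, (ε = 1 ∨ ε = -1) ∧
        ∀ q ∈ S ∪ closure Y, ε * (∑ i, pgrad g p i * (q i - p i)) ≤ 0) ∧
      ∀ q ∈ S ∪ closure Y, (∑ i, pgrad g p i * (q i - p i)) = 0 → q = p

/-!
A compact set has the same convex hull as any subset of it that contains its convex boundary. By
compactness of the convex boundary it is therefore enough to represent the sets `T k` in a small
cube around each `u ∈ ∂_c T`: the convex hull of finitely many bounded pieces is represented by
adding the cones of moment functionals of the pieces.

In a small cube the moment relaxation of `g ≥ 0` is exact. Restricting `g` to rays from the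
barycentre `v` of a moment functional `L`, one gets `L g ≤ g v` (Jensen) as soon as `L` is
nonpositive on the Hessian form of `g` along `x - v`. If `-∇²g` is a sum of squares, this is
imposed by moment matrices. If `-∇²g(u)` is positive definite, it follows from localizing
conditions for the cube, because `∇²g` differs little from `∇²g(u)` there. A polynomial `f` that
is strictly quasi-concave at its zero `u` reduces to this case: `f - (M / 2) f ^ 2` has the same
sign as `f` near `u` and, by Finsler's lemma, negative definite Hessian at `u` for large `M`.
-/

section Cones

variable {E F : Type*} [AddCommGroup E] [Module ℝ E] [AddCommGroup F] [Module ℝ F]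

/-- A spectrahedral cone: the solution set of a homogeneous linear matrix inequality. The matrix
is encoded as a quadratic form depending linearly on the point, so that no symmetry condition has
to be carried along. -/
def IsSpectrahedralCone (K : Set E) : Prop :=
  ∃ (d : ℕ) (Φ : E →ₗ[ℝ] QuadraticForm ℝ (Fin d → ℝ)), K = {e | ∀ w, 0 ≤ Φ e w}

namespace IsSpectrahedralCone

theorem of_quadraticForm {W : Type*} [AddCommGroup W] [Module ℝ W] [Module.Finite ℝ W]
    (Φ : E →ₗ[ℝ] QuadraticForm ℝ W) : IsSpectrahedralCone {e | ∀ w, 0 ≤ Φ e w} := by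
  let b := (Module.finBasis ℝ W).equivFun.symm
  refine ⟨_, { toFun := fun e ↦ (Φ e).comp b.toLinearMap
               map_add' := fun _ _ ↦ by ext; simp
               map_smul' := fun _ _ ↦ by ext; simp }, ?_⟩
  ext e
  exact b.surjective.forall

theorem preimage {K : Set F} (hK : IsSpectrahedralCone K) (g : E →ₗ[ℝ] F) :
    IsSpectrahedralCone (g ⁻¹' K) := by
  obtain ⟨d, Φ, rfl⟩ := hK
  exact ⟨d, Φ ∘ₗ g, rfl⟩

theorem iInter {α : Type*} [Finite α] {K : α → Set E} (hK : ∀ a, IsSpectrahedralCone (K a)) :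
    IsSpectrahedralCone (⋂ a, K a) := by
  have := Fintype.ofFinite α
  choose d Φ hΦ using hK
  convert of_quadraticForm
    ({ toFun := fun e ↦ QuadraticMap.pi fun a ↦ Φ a e
       map_add' := fun _ _ ↦ by ext; simp [Finset.sum_add_distrib]
       map_smul' := fun _ _ ↦ by ext; simp [Finset.mul_sum] } :
      E →ₗ[ℝ] QuadraticForm ℝ (∀ a, Fin (d a) → ℝ)) using 1
  ext e
  simp only [hΦ, mem_iInter, mem_ofPred_eq, LinearMap.coe_mk, AddHom.coe_mk]
  exact QuadraticMap.nonneg_pi_iff.symm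

theorem inter {K K' : Set E} (hK : IsSpectrahedralCone K) (hK' : IsSpectrahedralCone K') :
    IsSpectrahedralCone (K ∩ K') := by
  rw [inter_eq_iInter]
  exact iInter (Bool.forall_bool.2 ⟨hK', hK⟩)

theorem nonneg (g : E →ₗ[ℝ] ℝ) : IsSpectrahedralCone {e | 0 ≤ g e} := by
  convert of_quadraticForm (g.smulRight (QuadraticMap.sq (R := ℝ))) using 1
  ext e
  refine ⟨fun h w ↦ ?_, fun h ↦ ?_⟩
  · simpa using mul_nonneg h (mul_self_nonneg w)
  · simpa using h 1

theorem eq_zero (g : E →ₗ[ℝ] ℝ) : IsSpectrahedralCone {e | g e = 0} := by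
  convert (nonneg g).inter (nonneg (-g)) using 1
  ext e
  simp [le_antisymm_iff, and_comm]

theorem ker [Module.Finite ℝ F] (g : E →ₗ[ℝ] F) : IsSpectrahedralCone {e | g e = 0} := by
  convert iInter fun i ↦ eq_zero ((Module.finBasis ℝ F).coord i ∘ₗ g) using 1
  ext e
  simp only [mem_ofPred_eq, mem_iInter, LinearMap.comp_apply,
    Module.Basis.forall_coord_eq_zero_iff]

theorem add_mem {K : Set E} (hK : IsSpectrahedralCone K) {a b : E} (ha : a ∈ K) (hb : b ∈ K) :
    a + b ∈ K := by
  obtain ⟨d, Φ, rfl⟩ := hK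
  exact fun w ↦ by simpa using add_nonneg (ha w) (hb w)

theorem smul_mem {K : Set E} (hK : IsSpectrahedralCone K) {a : E} (ha : a ∈ K) {t : ℝ}
    (ht : 0 ≤ t) : t • a ∈ K := by
  obtain ⟨d, Φ, rfl⟩ := hK
  exact fun w ↦ by simpa using mul_nonneg ht (ha w)

theorem exists_matrix {K : Set E} (hK : IsSpectrahedralCone K) :
    ∃ (d : ℕ) (Φ : E →ₗ[ℝ] Matrix (Fin d) (Fin d) ℝ),
      (∀ e, (Φ e).IsSymm) ∧ K = {e | (Φ e).PosSemidef} := by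
  obtain ⟨d, Φ, rfl⟩ := hK
  refine ⟨d, { toFun := fun e ↦ (Φ e).toMatrix'
               map_add' := fun _ _ ↦ by simp [QuadraticForm.toMatrix']
               map_smul' := fun _ _ ↦ by simp [QuadraticForm.toMatrix'] },
    fun e ↦ QuadraticForm.isSymm_toMatrix' _, ?_⟩
  ext e
  have toMatrix'_apply (w : Fin d → ℝ) : w ⬝ᵥ (Φ e).toMatrix'.mulVec w = Φ e w := by
    rw [QuadraticForm.toMatrix', ← Matrix.toLinearMap₂'_apply', Matrix.toLinearMap₂'_toMatrix',
      QuadraticMap.associated_eq_self_apply]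
  change (∀ w, 0 ≤ Φ e w) ↔ (Φ e).toMatrix'.PosSemidef
  simp [Matrix.posSemidef_iff_dotProduct_mulVec, toMatrix'_apply, Matrix.isHermitian_iff_isSymm,
    QuadraticForm.isSymm_toMatrix']

end IsSpectrahedralCone

theorem isSpectrahedralCone_localizing {A : Type*} [CommRing A] [Algebra ℝ A] (p : A)
    (Q : Submodule ℝ A) [Module.Finite ℝ Q] :
    IsSpectrahedralCone {L : A →ₗ[ℝ] ℝ | ∀ q ∈ Q, 0 ≤ L (p * q ^ 2)} := by
  let φ : QuadraticMap ℝ Q A :=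
    QuadraticMap.linMulLin (LinearMap.mulLeft ℝ p ∘ₗ Q.subtype) Q.subtype
  convert IsSpectrahedralCone.of_quadraticForm
    ({ toFun := fun L ↦ L.compQuadraticMap φ
       map_add' := fun _ _ ↦ by ext; simp
       map_smul' := fun _ _ ↦ by ext; simp } : (A →ₗ[ℝ] ℝ) →ₗ[ℝ] QuadraticForm ℝ Q) using 1
  ext L
  simp [φ, sq, mul_assoc]

end Cones

section Lifts

universe u

variable {V : Type u} [AddCommGroup V] [Module ℝ V]

/-- A set with a spectrahedral lift: the linear image of an affine slice `{h = 1}` of a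
spectrahedral cone. This homogeneous, coordinate-free form of SDP representability behaves well
under intersections and convex hulls of unions; the lifting space may be infinite-dimensional. -/
def HasSpectrahedralLift (S : Set V) : Prop :=
  ∃ (E : Type u) (_ : AddCommGroup E) (_ : Module ℝ E) (K : Set E) (h : E →ₗ[ℝ] ℝ)
    (p : E →ₗ[ℝ] V), IsSpectrahedralCone K ∧ S = p '' (K ∩ h ⁻¹' {1})

namespace HasSpectrahedralLift

theorem exists_matrix [Module.Finite ℝ V] {S : Set V} (hS : HasSpectrahedralLift S) :
    ∃ (E : Type u) (_ : AddCommGroup E) (_ : Module ℝ E) (d : ℕ)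
      (Φ : E × ℝ × V →ₗ[ℝ] Matrix (Fin d) (Fin d) ℝ),
      (∀ q, (Φ q).IsSymm) ∧ S = {x | ∃ e, (Φ (e, 1, x)).PosSemidef} := by
  obtain ⟨E, _, _, K, h, p, hK, rfl⟩ := hS
  obtain ⟨d, Φ, hΦ_symm, hΦ⟩ := ((hK.preimage (LinearMap.fst ℝ E (ℝ × V))).inter
    (.ker (h.prod p ∘ₗ LinearMap.fst ℝ E _ - LinearMap.snd ℝ E _))).exists_matrix
  refine ⟨E, _, _, d, Φ, hΦ_symm, ?_⟩
  ext x
  have posSemidef_iff (e : E) : (Φ (e, 1, x)).PosSemidef ↔ e ∈ K ∧ h e = 1 ∧ p e = x := by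
    rw [← mem_ofPred_eq (p := fun q ↦ (Φ q).PosSemidef), ← hΦ]
    simp [sub_eq_zero]
  simp [posSemidef_iff, and_assoc]

theorem isSDPRepresentable {n : ℕ} {S : Set (Rn n)} (hS : HasSpectrahedralLift S) :
    IsSDPRepresentable S := by
  obtain ⟨E, _, _, d, Φ, hΦ_symm, rfl⟩ := hS.exists_matrix
  obtain ⟨N, B, hB⟩ := Submodule.fg_iff_exists_fin_generating_family.1
    (IsNoetherian.noetherian (LinearMap.range (Φ ∘ₗ LinearMap.inl ℝ E (ℝ × Rn n))))
  have exists_sum_iff (M : Matrix (Fin d) (Fin d) ℝ) :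
      (∃ u : Fin N → ℝ, ∑ j, u j • B j = M) ↔ ∃ e, Φ (e, 0, 0) = M := by
    rw [← Submodule.mem_span_range_iff_exists_fun, hB]
    rfl
  have decompose (e : E) (x : Rn n) : Φ (e, 1, x) =
      Φ (0, 1, 0) + ∑ i, x i • Φ (0, 0, EuclideanSpace.single i 1) + Φ (e, 0, 0) := by
    have hx : ∑ i, x i • (EuclideanSpace.single i 1 : Rn n) = x := by
      ext j
      simp [Pi.single_apply]
    simp only [← map_smul, ← map_sum, ← map_add]
    congr 1
    ext1
    · simp [Prod.fst_sum]
    · simp [Prod.ext_iff, Prod.snd_sum, Prod.fst_sum, hx]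
  refine ⟨N, d, Φ (0, 1, 0), fun i ↦ Φ (0, 0, EuclideanSpace.single i 1), B, hΦ_symm _,
    fun _ ↦ hΦ_symm _, fun j ↦ ?_, ?_⟩
  · obtain ⟨e, he⟩ := (exists_sum_iff (B j)).1 ⟨Pi.single j 1, by simp [Pi.single_apply]⟩
    exact he ▸ hΦ_symm _
  · ext x
    refine ⟨fun ⟨e, he⟩ ↦ ?_, fun ⟨u, hu⟩ ↦ ?_⟩
    · obtain ⟨u, hu⟩ := (exists_sum_iff _).2 ⟨e, rfl⟩
      exact ⟨u, by rwa [hu, ← decompose]⟩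
    · obtain ⟨e, he⟩ := (exists_sum_iff _).1 ⟨u, rfl⟩
      exact ⟨e, by rwa [decompose, he]⟩

theorem inter [Module.Finite ℝ V] {S S' : Set V} (hS : HasSpectrahedralLift S)
    (hS' : HasSpectrahedralLift S') : HasSpectrahedralLift (S ∩ S') := by
  obtain ⟨E, _, _, K, h, p, hK, rfl⟩ := hS
  obtain ⟨E', _, _, K', h', p', hK', rfl⟩ := hS'
  refine ⟨E × E', inferInstance, inferInstance, _, h ∘ₗ .fst ℝ E E', p ∘ₗ .fst ℝ E E',
    ((hK.preimage (.fst ℝ E E')).inter (hK'.preimage (.snd ℝ E E'))).inter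
      (.ker ((h.prod p) ∘ₗ .fst ℝ E E' - (h'.prod p') ∘ₗ .snd ℝ E E')), ?_⟩
  ext x
  constructor
  · rintro ⟨⟨e, ⟨he, h1⟩, rfl⟩, e', ⟨he', h1'⟩, hpe⟩
    refine ⟨(e, e'), ⟨⟨⟨he, he'⟩, ?_⟩, h1⟩, rfl⟩
    simp_all
  · rintro ⟨⟨e, e'⟩, ⟨⟨⟨he, he'⟩, heq⟩, h1⟩, rfl⟩
    obtain ⟨hh, hp⟩ : h e = h' e' ∧ p e = p' e' := by simpa [sub_eq_zero, Prod.ext_iff] using heq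
    exact ⟨⟨e, ⟨he, h1⟩, rfl⟩, e', ⟨he', hh.symm.trans h1⟩, hp.symm⟩

theorem halfspace (l : V →ₗ[ℝ] ℝ) (c : ℝ) : HasSpectrahedralLift {x | l x ≤ c} := by
  refine ⟨ℝ × V, inferInstance, inferInstance, _, .fst ℝ ℝ V, .snd ℝ ℝ V,
    .nonneg (c • .fst ℝ ℝ V - l ∘ₗ .snd ℝ ℝ V), ?_⟩
  ext x
  simp

theorem univ : HasSpectrahedralLift (Set.univ : Set V) := by
  simpa using halfspace (0 : V →ₗ[ℝ] ℝ) 0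

theorem empty : HasSpectrahedralLift (∅ : Set V) := by
  simpa [zero_lt_one.not_ge] using halfspace (0 : V →ₗ[ℝ] ℝ) (-1)

theorem iInter [Module.Finite ℝ V] {α : Type*} [Finite α] {S : α → Set V}
    (hS : ∀ a, HasSpectrahedralLift (S a)) : HasSpectrahedralLift (⋂ a, S a) := by
  have := Fintype.ofFinite α
  suffices ∀ s : Finset α, HasSpectrahedralLift (⋂ a ∈ s, S a) by simpa using this Finset.univ
  intro s
  induction s using Finset.cons_induction with
  | empty => simpa using univ
  | cons a s _ ih => simpa using (hS a).inter ih

theorem convex {S : Set V} (hS : HasSpectrahedralLift S) : Convex ℝ S := by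
  obtain ⟨E, _, _, K, h, p, hK, rfl⟩ := hS
  have hK_convex : Convex ℝ K := fun _ hx _ hy _ _ ha hb _ ↦
    hK.add_mem (hK.smul_mem hx ha) (hK.smul_mem hy hb)
  exact (hK_convex.inter ((convex_singleton 1).linear_preimage h)).linear_image p

theorem of_subsingleton [Subsingleton V] (S : Set V) : HasSpectrahedralLift S :=
  Subsingleton.set_cases empty univ S

end HasSpectrahedralLift

section Bounded

variable {E : Type*} [AddCommGroup E] [Module ℝ E] {V : Type*} [NormedAddCommGroup V]
  [NormedSpace ℝ V] {K : Set E} {h : E →ₗ[ℝ] ℝ} {p : E →ₗ[ℝ] V}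

theorem IsSpectrahedralCone.map_eq_zero_of_isBounded (hK : IsSpectrahedralCone K)
    (hne : (K ∩ h ⁻¹' {1}).Nonempty) (hb : Bornology.IsBounded (p '' (K ∩ h ⁻¹' {1})))
    {e : E} (he : e ∈ K) (h0 : h e = 0) : p e = 0 := by
  obtain ⟨e₀, he₀, h1 : h e₀ = 1⟩ := hne
  obtain ⟨C, hC⟩ := hb.exists_norm_le
  have norm_le (k : ℕ) : k * ‖p e‖ ≤ 2 * C := by
    have hmem : e₀ + (k : ℝ) • e ∈ K ∩ h ⁻¹' {1} :=
      ⟨hK.add_mem he₀ (hK.smul_mem he k.cast_nonneg), by simp [h0, h1]⟩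
    calc k * ‖p e‖ = ‖p (e₀ + (k : ℝ) • e) - p e₀‖ := by simp [norm_smul]
      _ ≤ ‖p (e₀ + (k : ℝ) • e)‖ + ‖p e₀‖ := norm_sub_le _ _
      _ ≤ C + C := add_le_add (hC _ ⟨_, hmem, rfl⟩) (hC _ ⟨e₀, ⟨he₀, h1⟩, rfl⟩)
      _ = 2 * C := by ring
  by_contra hpe
  obtain ⟨k, hk⟩ := exists_nat_gt (2 * C / ‖p e‖)
  rw [div_lt_iff₀ (norm_pos_iff.2 hpe)] at hk
  exact hk.not_ge (norm_le k)

theorem IsSpectrahedralCone.exists_map_eq_smul (hK : IsSpectrahedralCone K)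
    (hne : (K ∩ h ⁻¹' {1}).Nonempty) (hb : Bornology.IsBounded (p '' (K ∩ h ⁻¹' {1})))
    {e : E} (he : e ∈ K) (h0 : 0 ≤ h e) : ∃ y ∈ p '' (K ∩ h ⁻¹' {1}), p e = h e • y := by
  rcases h0.eq_or_lt with h0 | h0
  · obtain ⟨y, hy⟩ := hne.image p
    exact ⟨y, hy, by simp [hK.map_eq_zero_of_isBounded hne hb he h0.symm, ← h0]⟩
  · exact ⟨_, ⟨(h e)⁻¹ • e, ⟨hK.smul_mem he (by positivity), by simp [h0.ne']⟩, rfl⟩,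
      by simp [smul_smul, h0.ne']⟩

end Bounded

section BoundedHull

variable {V : Type u} [NormedAddCommGroup V] [NormedSpace ℝ V]

namespace HasSpectrahedralLift

/- The two cones are added; a summand of height zero contributes nothing, by boundedness. -/
theorem convexHull_union {S S' : Set V} (hS : HasSpectrahedralLift S)
    (hS' : HasSpectrahedralLift S') (hb : Bornology.IsBounded S) (hb' : Bornology.IsBounded S') :
    HasSpectrahedralLift (convexHull ℝ (S ∪ S')) := by
  rcases S.eq_empty_or_nonempty with rfl | hne
  · rwa [Set.empty_union, hS'.convex.convexHull_eq]
  rcases S'.eq_empty_or_nonempty with rfl | hne'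
  · rwa [Set.union_empty, hS.convex.convexHull_eq]
  rw [hS.convex.convexHull_union hS'.convex hne hne']
  obtain ⟨E, _, _, K, h, p, hK, rfl⟩ := hS
  obtain ⟨E', _, _, K', h', p', hK', rfl⟩ := hS'
  refine ⟨E × E', inferInstance, inferInstance, _, h.coprod h', p.coprod p',
    ((hK.preimage (.fst ℝ E E')).inter (hK'.preimage (.snd ℝ E E'))).inter
      ((IsSpectrahedralCone.nonneg (h ∘ₗ .fst ℝ E E')).inter (.nonneg (h' ∘ₗ .snd ℝ E E'))), ?_⟩
  ext x
  rw [mem_convexJoin]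
  constructor
  · rintro ⟨_, ⟨e, ⟨he, h1⟩, rfl⟩, _, ⟨e', ⟨he', h1'⟩, rfl⟩, a, b, ha, hb, hab, rfl⟩
    refine ⟨(a • e, b • e'), ⟨⟨⟨hK.smul_mem he ha, hK'.smul_mem he' hb⟩, ?_⟩, ?_⟩, ?_⟩ <;>
      simp_all
  · rintro ⟨⟨e, e'⟩, ⟨⟨⟨he, he'⟩, h0, h0'⟩, h1⟩, rfl⟩
    obtain ⟨y, hy, hpe : p e = h e • y⟩ :=
      hK.exists_map_eq_smul (image_nonempty.1 hne) hb he h0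
    obtain ⟨y', hy', hpe' : p' e' = h' e' • y'⟩ :=
      hK'.exists_map_eq_smul (image_nonempty.1 hne') hb' he' h0'
    exact ⟨y, hy, y', hy', h e, h' e', h0, h0', h1, by simp [hpe, hpe']⟩

theorem convexHull_biUnion {α : Type*} {s : Set α} (hs : s.Finite) {S : α → Set V}
    (hS : ∀ a ∈ s, HasSpectrahedralLift (S a)) (hb : ∀ a ∈ s, Bornology.IsBounded (S a)) :
    HasSpectrahedralLift (convexHull ℝ (⋃ a ∈ s, S a)) := by
  induction s, hs using Set.Finite.induction_on with
  | empty => simpa using empty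
  | @insert a s _ hs ih =>
    rw [forall_mem_insert] at hS hb
    rw [biUnion_insert, ← convexHull_convexHull_union_right]
    exact hS.1.convexHull_union (ih hS.2 hb.2) hb.1
      (isBounded_convexHull.2 ((Bornology.isBounded_biUnion hs).2 hb.2))

end HasSpectrahedralLift

end BoundedHull

end Lifts

section CompactHull

variable {V : Type*} [AddCommGroup V] [Module ℝ V] [TopologicalSpace V] [ContinuousAdd V]
  [ContinuousSMul ℝ V]

theorem isCompact_convexJoin {S S' : Set V} (hS : IsCompact S) (hS' : IsCompact S') :
    IsCompact (convexJoin ℝ S S') := by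
  have h : IsCompact ((fun q : V × V × ℝ ↦ (1 - q.2.2) • q.1 + q.2.2 • q.2.1) ''
      (S ×ˢ S' ×ˢ Icc (0 : ℝ) 1)) :=
    (hS.prod (hS'.prod isCompact_Icc)).image (by fun_prop)
  convert h using 1
  ext x
  rw [mem_convexJoin]
  constructor
  · rintro ⟨y, hy, y', hy', a, b, ha, hb, hab, rfl⟩
    exact ⟨(y, y', b), ⟨hy, hy', hb, by linarith⟩, by simp [← hab]⟩
  · rintro ⟨⟨y, y', b⟩, ⟨hy, hy', hb, hb1⟩, rfl⟩
    exact ⟨y, hy, y', hy', 1 - b, b, by simpa using hb1, hb, by simp, rfl⟩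

theorem isCompact_convexHull_biUnion {α : Type*} {s : Set α} (hs : s.Finite) {S : α → Set V}
    (hS : ∀ a ∈ s, IsCompact (S a)) (hS_convex : ∀ a ∈ s, Convex ℝ (S a)) :
    IsCompact (convexHull ℝ (⋃ a ∈ s, S a)) := by
  induction s, hs using Set.Finite.induction_on with
  | empty => simp
  | @insert a s _ _ ih =>
    rw [forall_mem_insert] at hS hS_convex
    have ih := ih hS.2 hS_convex.2
    rw [biUnion_insert, ← convexHull_convexHull_union_right]
    rcases (S a).eq_empty_or_nonempty with h | hne
    · simpa [h] using ih
    rcases (convexHull ℝ (⋃ a ∈ s, S a)).eq_empty_or_nonempty with h | hne'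
    · simpa [h, hS_convex.1.convexHull_eq] using hS.1
    rw [hS_convex.1.convexHull_union (convex_convexHull ℝ _) hne hne']
    exact isCompact_convexJoin hS.1 ih

end CompactHull

section Homothety

variable {σ : Type*}

/-- Substitution of the homothety `x ↦ v + s (x - v)` into polynomials. -/
def homothetySubst (v : σ → ℝ) (s : ℝ) : MvPolynomial σ ℝ →ₐ[ℝ] MvPolynomial σ ℝ :=
  aeval fun i ↦ C (v i) + C s * (X i - C (v i))

@[simp]
theorem homothetySubst_X (v : σ → ℝ) (s : ℝ) (i : σ) :
    homothetySubst v s (X i) = C (v i) + C s * (X i - C (v i)) :=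
  aeval_X _ _

theorem homothetySubst_zero (v : σ → ℝ) (g : MvPolynomial σ ℝ) :
    homothetySubst v 0 g = C (eval v g) := by
  have : homothetySubst v 0 = (Algebra.ofId ℝ _).comp (aeval v) :=
    MvPolynomial.algHom_ext fun i ↦ by simp [Algebra.ofId_apply, algebraMap_eq]
  simp [this, Algebra.ofId_apply, algebraMap_eq, aeval_eq_eval]

theorem homothetySubst_one (v : σ → ℝ) (g : MvPolynomial σ ℝ) : homothetySubst v 1 g = g := by
  have : homothetySubst v 1 = AlgHom.id ℝ _ := MvPolynomial.algHom_ext fun i ↦ by simp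
  simp [this]

theorem linearMap_apply_C (L : MvPolynomial σ ℝ →ₗ[ℝ] ℝ) (a : ℝ) : L (C a) = a * L 1 := by
  rw [← mul_one (C a), ← MvPolynomial.smul_eq_C_mul, map_smul, smul_eq_mul]

variable [Fintype σ]

theorem hasDerivAt_homothetySubst (v : σ → ℝ) (g : MvPolynomial σ ℝ) (s : ℝ)
    (L : MvPolynomial σ ℝ →ₗ[ℝ] ℝ) :
    HasDerivAt (fun s ↦ L (homothetySubst v s g))
      (L (∑ i, (X i - C (v i)) * homothetySubst v s (pderiv i g))) s := by
  induction g using MvPolynomial.induction_on generalizing L with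
  | C a => simpa [homothetySubst] using hasDerivAt_const s _
  | add p q hp hq => simpa [mul_add, Finset.sum_add_distrib] using (hp L).fun_add (hq L)
  | mul_X p k hp =>
    let L' := L ∘ₗ LinearMap.mulLeft ℝ (X k - C (v k))
    have map_mul_X (q : MvPolynomial σ ℝ) (s : ℝ) :
        L (q * homothetySubst v s (X k)) = v k * L q + s * L' q := by
      simp only [L', LinearMap.comp_apply, LinearMap.mulLeft_apply, ← smul_eq_mul (a := v k),
        ← smul_eq_mul (a := s), ← map_smul, ← map_add, MvPolynomial.smul_eq_C_mul,
        homothetySubst_X]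
      congr 1
      ring
    have leibniz : ∑ i, (X i - C (v i)) * homothetySubst v s (pderiv i (p * X k)) =
        (∑ i, (X i - C (v i)) * homothetySubst v s (pderiv i p)) * homothetySubst v s (X k) +
          (X k - C (v k)) * homothetySubst v s p := by
      classical
      simp [Derivation.leibniz, pderiv_X, Pi.single_apply, mul_add, apply_ite,
        Finset.sum_add_distrib, Finset.sum_mul, -homothetySubst_X, add_comm, mul_assoc,
        mul_comm (homothetySubst v s (X k))]
    simp only [leibniz, map_add, map_mul (homothetySubst v _), map_mul_X]
    refine (((hp L).const_mul (v k)).fun_add ((hasDerivAt_id' s).fun_mul (hp L'))).congr_deriv ?_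
    simp only [L', LinearMap.comp_apply, LinearMap.mulLeft_apply]
    ring

/-- The second derivative of `s ↦ g (v + s (x - v))`, as a polynomial in `x`. -/
def radialHessian (v : σ → ℝ) (s : ℝ) (g : MvPolynomial σ ℝ) : MvPolynomial σ ℝ :=
  ∑ i, ∑ j, (X i - C (v i)) * (X j - C (v j)) * homothetySubst v s (pderiv i (pderiv j g))

theorem hasDerivAt_homothetySubst_deriv (v : σ → ℝ) (g : MvPolynomial σ ℝ) (s : ℝ)
    (L : MvPolynomial σ ℝ →ₗ[ℝ] ℝ) :
    HasDerivAt (fun s ↦ L (∑ j, (X j - C (v j)) * homothetySubst v s (pderiv j g)))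
      (L (radialHessian v s g)) s := by
  simp only [map_sum]
  refine (HasDerivAt.fun_sum fun j _ ↦ hasDerivAt_homothetySubst v (pderiv j g) s
    (L ∘ₗ LinearMap.mulLeft ℝ (X j - C (v j)))).congr_deriv ?_
  simp only [radialHessian, LinearMap.comp_apply, LinearMap.mulLeft_apply, ← map_sum,
    Finset.mul_sum]
  rw [Finset.sum_comm]
  simp only [mul_left_comm, mul_assoc]

/-- Jensen's inequality for a linear functional that need not come from a measure: only the
second derivative of `g` along rays from the barycenter has to be seen as nonpositive. -/
theorem le_eval_of_radialHessian_nonpos {L : MvPolynomial σ ℝ →ₗ[ℝ] ℝ} {v : σ → ℝ}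
    {g : MvPolynomial σ ℝ} (h1 : L 1 = 1) (hX : ∀ i, L (X i) = v i)
    (hess : ∀ s ∈ Ioo (0 : ℝ) 1, L (radialHessian v s g) ≤ 0) : L g ≤ eval v g := by
  have hderiv (s : ℝ) := hasDerivAt_homothetySubst v g s L
  have hconcave : ConcaveOn ℝ (Icc 0 1) fun s ↦ L (homothetySubst v s g) :=
    concaveOn_of_hasDerivWithinAt2_nonpos (convex_Icc 0 1)
      (fun s _ ↦ (hderiv s).continuousAt.continuousWithinAt)
      (fun s _ ↦ (hderiv s).hasDerivWithinAt)
      (fun s _ ↦ (hasDerivAt_homothetySubst_deriv v g s L).hasDerivWithinAt)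
      (by simpa using hess)
  have hderiv_zero : L (∑ i, (X i - C (v i)) * homothetySubst v 0 (pderiv i g)) = 0 := by
    rw [map_sum]
    refine Finset.sum_eq_zero fun i _ ↦ ?_
    rw [homothetySubst_zero, mul_comm, ← MvPolynomial.smul_eq_C_mul, map_smul, map_sub, hX,
      linearMap_apply_C, h1, mul_one, sub_self, smul_zero]
  have := hconcave.slope_le_of_hasDerivAt (left_mem_Icc.2 zero_le_one)
    (right_mem_Icc.2 zero_le_one) one_pos ((hderiv 0).congr_deriv hderiv_zero)
  simpa [slope_def_field, homothetySubst_zero, homothetySubst_one,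
    linearMap_apply_C, h1] using this

end Homothety

section Moments

variable {n : ℕ}

/-- Evaluation at a point as a linear functional, i.e. the moment functional of a Dirac mass. -/
def evalFunctional (x : Rn n) : MvPolynomial (Fin n) ℝ →ₗ[ℝ] ℝ :=
  (aeval fun i ↦ x i : MvPolynomial (Fin n) ℝ →ₐ[ℝ] ℝ).toLinearMap

@[simp]
theorem evalFunctional_apply (x : Rn n) (p : MvPolynomial (Fin n) ℝ) :
    evalFunctional x p = peval p x := by
  simp [evalFunctional, peval, aeval_eq_eval]

/-- The vector of first moments of a linear functional on polynomials. -/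
def barycenter : (MvPolynomial (Fin n) ℝ →ₗ[ℝ] ℝ) →ₗ[ℝ] Rn n :=
  (WithLp.linearEquiv 2 ℝ (Fin n → ℝ)).symm.toLinearMap ∘ₗ .pi fun i ↦ .applyₗ (X i)

@[simp]
theorem barycenter_apply (L : MvPolynomial (Fin n) ℝ →ₗ[ℝ] ℝ) (i : Fin n) :
    barycenter L i = L (X i) :=
  rfl

/-- Exactness of moment relaxations: by Jensen, projecting a cone of moment functionals to first
moments adds no points to `B ∩ {g ≥ 0}`. -/
theorem HasSpectrahedralLift.of_moments {g : MvPolynomial (Fin n) ℝ} {B : Set (Rn n)}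
    {K : Set (MvPolynomial (Fin n) ℝ →ₗ[ℝ] ℝ)} (hK : IsSpectrahedralCone K)
    (heval : ∀ x ∈ B, evalFunctional x ∈ K) (hbary : ∀ L ∈ K, L 1 = 1 → barycenter L ∈ B)
    (hess : ∀ L ∈ K, L 1 = 1 → ∀ s ∈ Ioo (0 : ℝ) 1,
      L (radialHessian (fun i ↦ barycenter L i) s g) ≤ 0) :
    HasSpectrahedralLift (B ∩ {x | 0 ≤ peval g x}) := by
  refine ⟨_, inferInstance, inferInstance, _, .applyₗ 1, barycenter,
    hK.inter (.nonneg (.applyₗ g)), ?_⟩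
  ext x
  constructor
  · rintro ⟨hx, hg⟩
    exact ⟨evalFunctional x, ⟨⟨heval x hx, by simpa using hg⟩, by simp [peval]⟩,
      by ext i; simp [peval]⟩
  · rintro ⟨L, ⟨⟨hL, hLg : 0 ≤ L g⟩, h1 : L 1 = 1⟩, rfl⟩
    exact ⟨hbary L hL h1,
      hLg.trans (le_eval_of_radialHessian_nonpos h1 (fun _ ↦ rfl) (hess L hL h1))⟩

theorem totalDegree_aeval_le {σ τ R : Type*} [CommSemiring R] {f : σ → MvPolynomial τ R}
    (hf : ∀ i, (f i).totalDegree ≤ 1) (p : MvPolynomial σ R) :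
    (aeval f p).totalDegree ≤ p.totalDegree := by
  rw [aeval_def, eval₂_eq]
  refine totalDegree_finsetSum_le fun m hm ↦ ?_
  calc (algebraMap R _ (coeff m p) * ∏ i ∈ m.support, f i ^ m i).totalDegree
      ≤ 0 + ∑ i ∈ m.support, (f i ^ m i).totalDegree :=
        (totalDegree_mul _ _).trans
          (add_le_add (totalDegree_C _).le (totalDegree_finsetProd _ _))
    _ ≤ ∑ i ∈ m.support, m i := by
        rw [zero_add]
        exact Finset.sum_le_sum fun i _ ↦
          (totalDegree_pow _ _).trans (mul_le_of_le_one_right' (hf i))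
    _ ≤ p.totalDegree := le_totalDegree hm

theorem totalDegree_X_sub_C_le {σ R : Type*} [CommRing R] [Nontrivial R] (i : σ) (a : R) :
    (X i - C a).totalDegree ≤ 1 := by
  simpa using totalDegree_sub (X i) (C a)

theorem totalDegree_homothetySubst_le {σ : Type*} (v : σ → ℝ) (s : ℝ) (p : MvPolynomial σ ℝ) :
    (homothetySubst v s p).totalDegree ≤ p.totalDegree := by
  refine totalDegree_aeval_le (fun i ↦ ?_) p
  refine (totalDegree_add _ _).trans (max_le (by simp) ((totalDegree_mul _ _).trans ?_))
  simpa using totalDegree_X_sub_C_le i (v i)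

theorem radialHessian_eq_neg_sum_sq {σ : Type*} [Fintype σ] {k : ℕ} {g : MvPolynomial σ ℝ}
    {W : Fin k → σ → MvPolynomial σ ℝ}
    (hW : ∀ i j, -pderiv i (pderiv j g) = ∑ l, W l i * W l j) (v : σ → ℝ) (s : ℝ) :
    radialHessian v s g = -∑ l, (∑ i, homothetySubst v s (W l i) * (X i - C (v i))) ^ 2 := by
  have hW' (i j : σ) : pderiv i (pderiv j g) = -∑ l, W l i * W l j := by rw [← hW, neg_neg]
  simp only [radialHessian, hW', map_neg, map_sum, map_mul, mul_neg, Finset.sum_neg_distrib,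
    neg_inj, sq, Finset.sum_mul_sum]
  simp only [Finset.mul_sum]
  rw [Finset.sum_comm_cycle]
  refine Finset.sum_congr rfl fun l _ ↦ Finset.sum_congr rfl fun i _ ↦
    Finset.sum_congr rfl fun j _ ↦ ?_
  ring

theorem SosConcave.hasSpectrahedralLift {g : MvPolynomial (Fin n) ℝ} (hg : SosConcave g) :
    HasSpectrahedralLift {x : Rn n | 0 ≤ peval g x} := by
  obtain ⟨k, W, hW⟩ := hg
  let D := Finset.univ.sup fun q : Fin k × Fin n ↦ (W q.1 q.2).totalDegree
  have degree_le (l : Fin k) (i : Fin n) : (W l i).totalDegree ≤ D :=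
    Finset.le_sup (f := fun q : Fin k × Fin n ↦ (W q.1 q.2).totalDegree) (Finset.mem_univ (l, i))
  rw [← Set.univ_inter {x : Rn n | 0 ≤ peval g x}]
  refine .of_moments
    (isSpectrahedralCone_localizing 1 (restrictTotalDegree (Fin n) ℝ (D + 1))) ?_ (by simp) ?_
  · intro x _ q _
    simpa [peval] using sq_nonneg _
  · intro L hL _ s _
    rw [radialHessian_eq_neg_sum_sq hW, map_neg, map_sum, Left.neg_nonpos_iff]
    refine Finset.sum_nonneg fun l _ ↦ ?_
    simpa using hL _ ((mem_restrictTotalDegree _ _ _).2 (totalDegree_finsetSum_le fun i _ ↦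
      (totalDegree_mul _ _).trans (add_le_add
        ((totalDegree_homothetySubst_le _ _ _).trans (degree_le l i))
        (totalDegree_X_sub_C_le _ _))))

end Moments

section WeightedNorm

variable {σ τ : Type*} {δ : ℝ}

/-- The `ℓ¹` norm of the coefficients of a polynomial, a monomial of degree `d` having weight
`δ ^ d`. It bounds the values of the polynomial on the cube of radius `δ`. -/
def weightedNorm (δ : ℝ) (p : MvPolynomial σ ℝ) : ℝ :=
  ∑ m ∈ p.support, |coeff m p| * δ ^ m.degree

theorem weightedNorm_eq_sum {p : MvPolynomial σ ℝ} {s : Finset (σ →₀ ℕ)} (hs : p.support ⊆ s) :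
    weightedNorm δ p = ∑ m ∈ s, |coeff m p| * δ ^ m.degree :=
  Finset.sum_subset hs fun m _ hm ↦ by simp [notMem_support_iff.1 hm]

theorem weightedNorm_zero_left (p : MvPolynomial σ ℝ) : weightedNorm 0 p = |coeff 0 p| := by
  classical
  rw [weightedNorm_eq_sum (p.support.subset_insert 0), Finset.sum_eq_single_of_mem 0 (by simp)]
  · simp
  · intro m _ hm
    simp [(Finsupp.degree_eq_zero_iff m).not.2 hm]

theorem continuous_weightedNorm (p : MvPolynomial σ ℝ) : Continuous (weightedNorm · p) := by
  unfold weightedNorm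
  fun_prop

theorem weightedNorm_monomial (m : σ →₀ ℕ) (a : ℝ) :
    weightedNorm δ (monomial m a) = |a| * δ ^ m.degree := by
  classical
  simp [weightedNorm_eq_sum support_monomial_subset]

theorem weightedNorm_C (a : ℝ) : weightedNorm δ (C a : MvPolynomial σ ℝ) = |a| := by
  simpa using weightedNorm_monomial (δ := δ) (0 : σ →₀ ℕ) a

theorem weightedNorm_one (δ : ℝ) : weightedNorm δ (1 : MvPolynomial σ ℝ) = 1 := by
  simpa using weightedNorm_C (δ := δ) (σ := σ) 1

theorem weightedNorm_X (i : σ) : weightedNorm δ (X i : MvPolynomial σ ℝ) = δ := by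
  simpa using! weightedNorm_monomial (δ := δ) (.single i 1) 1

theorem weightedNorm_nonneg (hδ : 0 ≤ δ) (p : MvPolynomial σ ℝ) : 0 ≤ weightedNorm δ p :=
  Finset.sum_nonneg fun _ _ ↦ by positivity

theorem weightedNorm_add_le (hδ : 0 ≤ δ) (p q : MvPolynomial σ ℝ) :
    weightedNorm δ (p + q) ≤ weightedNorm δ p + weightedNorm δ q := by
  classical
  rw [weightedNorm_eq_sum support_add, weightedNorm_eq_sum Finset.subset_union_left,
    weightedNorm_eq_sum Finset.subset_union_right, ← Finset.sum_add_distrib]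
  refine Finset.sum_le_sum fun m _ ↦ ?_
  rw [coeff_add, ← add_mul]
  gcongr
  exact abs_add_le _ _

theorem weightedNorm_sum_le (hδ : 0 ≤ δ) {ι : Type*} (s : Finset ι) (p : ι → MvPolynomial σ ℝ) :
    weightedNorm δ (∑ i ∈ s, p i) ≤ ∑ i ∈ s, weightedNorm δ (p i) :=
  Finset.le_sum_of_subadditive _ (by simp [weightedNorm]) (weightedNorm_add_le hδ) s p

theorem weightedNorm_mul_le (hδ : 0 ≤ δ) (p q : MvPolynomial σ ℝ) :
    weightedNorm δ (p * q) ≤ weightedNorm δ p * weightedNorm δ q := by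
  calc weightedNorm δ (p * q)
      = weightedNorm δ (∑ m ∈ p.support, ∑ m' ∈ q.support,
          monomial (m + m') (coeff m p * coeff m' q)) := by
        conv_lhs => rw [p.as_sum, q.as_sum, Finset.sum_mul_sum]
        simp only [monomial_mul]
    _ ≤ ∑ m ∈ p.support, ∑ m' ∈ q.support,
          weightedNorm δ (monomial (m + m') (coeff m p * coeff m' q)) :=
        (weightedNorm_sum_le hδ _ _).trans
          (Finset.sum_le_sum fun _ _ ↦ weightedNorm_sum_le hδ _ _)
    _ = weightedNorm δ p * weightedNorm δ q := by
        rw [weightedNorm, weightedNorm, Finset.sum_mul_sum]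
        refine Finset.sum_congr rfl fun m _ ↦ Finset.sum_congr rfl fun m' _ ↦ ?_
        rw [weightedNorm_monomial, abs_mul, map_add, pow_add]
        ring

theorem weightedNorm_pow_le (hδ : 0 ≤ δ) (p : MvPolynomial σ ℝ) (k : ℕ) :
    weightedNorm δ (p ^ k) ≤ weightedNorm δ p ^ k := by
  simpa using Finset.le_prod_of_submultiplicative_of_nonneg (weightedNorm δ)
    (weightedNorm_nonneg hδ) (weightedNorm_one δ).le (weightedNorm_mul_le hδ)
    (Finset.range k) fun _ ↦ p

theorem weightedNorm_prod_pow_le (hδ : 0 ≤ δ) (m : σ →₀ ℕ) {f : σ → MvPolynomial τ ℝ}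
    (hf : ∀ i, weightedNorm δ (f i) ≤ δ) :
    weightedNorm δ (∏ i ∈ m.support, f i ^ m i) ≤ δ ^ m.degree := by
  calc weightedNorm δ (∏ i ∈ m.support, f i ^ m i)
      ≤ ∏ i ∈ m.support, weightedNorm δ (f i ^ m i) :=
        Finset.le_prod_of_submultiplicative_of_nonneg _ (weightedNorm_nonneg hδ)
          (weightedNorm_one δ).le (weightedNorm_mul_le hδ) _ _
    _ ≤ ∏ i ∈ m.support, δ ^ m i :=
        Finset.prod_le_prod (fun _ _ ↦ weightedNorm_nonneg hδ _) fun i _ ↦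
          (weightedNorm_pow_le hδ _ _).trans
            (pow_le_pow_left₀ (weightedNorm_nonneg hδ _) (hf i) _)
    _ = δ ^ m.degree := Finset.prod_pow_eq_pow_sum _ _ _

theorem weightedNorm_aeval_le (hδ : 0 ≤ δ) {f : σ → MvPolynomial τ ℝ}
    (hf : ∀ i, weightedNorm δ (f i) ≤ δ) (p : MvPolynomial σ ℝ) :
    weightedNorm δ (aeval f p) ≤ weightedNorm δ p := by
  rw [aeval_def, eval₂_eq]
  refine (weightedNorm_sum_le hδ _ _).trans (Finset.sum_le_sum fun m _ ↦ ?_)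
  refine (weightedNorm_mul_le hδ _ _).trans ?_
  rw [algebraMap_eq, weightedNorm_C]
  exact mul_le_mul_of_nonneg_left (weightedNorm_prod_pow_le hδ m hf) (abs_nonneg _)

theorem abs_apply_le_weightedNorm_mul {Λ : MvPolynomial σ ℝ →ₗ[ℝ] ℝ} {c : ℝ} {D : ℕ}
    (hΛ : ∀ m : σ →₀ ℕ, m.degree ≤ D → |Λ (monomial m 1)| ≤ δ ^ m.degree * c)
    {p : MvPolynomial σ ℝ} (hp : p.totalDegree ≤ D) : |Λ p| ≤ weightedNorm δ p * c := by
  conv_lhs => rw [p.as_sum, map_sum]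
  rw [weightedNorm, Finset.sum_mul]
  refine (Finset.abs_sum_le_sum_abs _ _).trans (Finset.sum_le_sum fun m hm ↦ ?_)
  rw [show monomial m (coeff m p) = coeff m p • monomial m 1 by simp [smul_monomial], map_smul,
    smul_eq_mul, abs_mul, mul_assoc]
  exact mul_le_mul_of_nonneg_left (hΛ m ((le_totalDegree hm).trans hp)) (abs_nonneg _)

end WeightedNorm

section CubeCone

variable {σ : Type*} {u v : σ → ℝ} {δ s : ℝ} {D : ℕ}

/-- Substitution of the translation `x ↦ x + u` into polynomials. -/
def translateSubst (u : σ → ℝ) : MvPolynomial σ ℝ →ₐ[ℝ] MvPolynomial σ ℝ :=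
  aeval fun i ↦ X i + C (u i)

@[simp]
theorem translateSubst_X (u : σ → ℝ) (i : σ) : translateSubst u (X i) = X i + C (u i) :=
  aeval_X _ _

theorem eval_translateSubst (u v : σ → ℝ) (p : MvPolynomial σ ℝ) :
    eval v (translateSubst u p) = eval (v + u) p := by
  have : (aeval v).comp (translateSubst u) = (aeval (v + u) : MvPolynomial σ ℝ →ₐ[ℝ] ℝ) :=
    MvPolynomial.algHom_ext fun i ↦ by simp
  simpa [aeval_eq_eval] using DFunLike.congr_fun this p

theorem coeff_zero_translateSubst (u : σ → ℝ) (p : MvPolynomial σ ℝ) :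
    coeff 0 (translateSubst u p) = eval u p := by
  rw [← constantCoeff_eq, ← eval_zero]
  simpa using eval_translateSubst u 0 p

theorem totalDegree_translateSubst_le (u : σ → ℝ) (p : MvPolynomial σ ℝ) :
    (translateSubst u p).totalDegree ≤ p.totalDegree := by
  refine totalDegree_aeval_le (fun i ↦ ?_) p
  exact (totalDegree_add _ _).trans (by simp)

/-- In the coordinates `x - u`, a homothety whose center `v` is `δ`-close to `u` is a substitution
of polynomials of weighted norm at most `δ`. -/
theorem exists_homothetySubst_eq (hδ : 0 ≤ δ) (hv : ∀ i, |v i - u i| ≤ δ)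
    (hs : s ∈ Icc (0 : ℝ) 1) (p : MvPolynomial σ ℝ) : ∃ p' : MvPolynomial σ ℝ,
      homothetySubst v s p = translateSubst (-u) p' ∧ p'.totalDegree ≤ p.totalDegree ∧
      weightedNorm δ p' ≤ weightedNorm δ (translateSubst u p) := by
  let f (i : σ) : MvPolynomial σ ℝ := C ((1 - s) * (v i - u i)) + C s * X i
  refine ⟨aeval f (translateSubst u p), ?_, ?_, ?_⟩
  · have : homothetySubst v s = (translateSubst (-u)).comp ((aeval f).comp (translateSubst u)) :=
      MvPolynomial.algHom_ext fun i ↦ by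
        simp [f]
        ring
    exact DFunLike.congr_fun this p
  · refine (totalDegree_aeval_le (fun i ↦ ?_) _).trans (totalDegree_translateSubst_le u p)
    exact (totalDegree_add _ _).trans (max_le ((totalDegree_C _).trans_le zero_le_one)
      ((totalDegree_mul _ _).trans (by simp)))
  · refine weightedNorm_aeval_le hδ (fun i ↦ ?_) _
    calc weightedNorm δ (f i)
        ≤ |(1 - s) * (v i - u i)| + |s| * δ := by
          refine (weightedNorm_add_le hδ _ _).trans (add_le_add (weightedNorm_C _).le ?_)
          simpa [weightedNorm_C, weightedNorm_X] using weightedNorm_mul_le hδ (C s) (X i)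
      _ ≤ (1 - s) * δ + s * δ := by
          rw [abs_mul, abs_of_nonneg hs.1, abs_of_nonneg (sub_nonneg.2 hs.2)]
          gcongr
          exacts [sub_nonneg.2 hs.2, hv i]
      _ = δ := by ring

/-- The cone of linear functionals for which every monomial of degree `d ≤ D` in the coordinates
`x - u` is bounded by `δ ^ d`, when weighted by squares of affine polynomials. Point evaluations
in the cube of radius `δ` around `u` have this property. -/
def cubeCone (u : σ → ℝ) (δ : ℝ) (D : ℕ) : Set (MvPolynomial σ ℝ →ₗ[ℝ] ℝ) :=
  {L | ∀ m : σ →₀ ℕ, m.degree ≤ D → ∀ q ∈ restrictTotalDegree σ ℝ 1,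
    |L (translateSubst (-u) (monomial m 1) * q ^ 2)| ≤ δ ^ m.degree * L (q ^ 2)}

theorem isSpectrahedralCone_cubeCone [Finite σ] (u : σ → ℝ) (δ : ℝ) (D : ℕ) :
    IsSpectrahedralCone (cubeCone u δ D) := by
  have : Finite {m : σ →₀ ℕ | m.degree ≤ D} := Finsupp.finite_of_degree_le D
  convert IsSpectrahedralCone.iInter fun m : {m : σ →₀ ℕ | m.degree ≤ D} ↦
    (isSpectrahedralCone_localizing (C (δ ^ m.1.degree) - translateSubst (-u) (monomial m 1))
      (restrictTotalDegree σ ℝ 1)).inter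
    (isSpectrahedralCone_localizing (C (δ ^ m.1.degree) + translateSubst (-u) (monomial m 1))
      (restrictTotalDegree σ ℝ 1)) using 1
  ext L
  simp only [cubeCone, mem_ofPred_eq, mem_iInter, Subtype.forall, mem_inter_iff, ← forall_and]
  refine forall₄_congr fun m _ q _ ↦ ?_
  rw [sub_mul, add_mul, map_sub, map_add, ← MvPolynomial.smul_eq_C_mul, map_smul, smul_eq_mul,
    abs_le', sub_nonneg, neg_le_iff_add_nonneg]

variable {L : MvPolynomial σ ℝ →ₗ[ℝ] ℝ}

theorem aeval_mem_cubeCone (hv : ∀ i, |v i - u i| ≤ δ) (D : ℕ) :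
    (aeval v : MvPolynomial σ ℝ →ₐ[ℝ] ℝ).toLinearMap ∈ cubeCone u δ D := by
  intro m _ q _
  have abs_le : |eval (v - u) (monomial m 1)| ≤ δ ^ m.degree := by
    rw [eval_monomial, one_mul, Finsupp.prod, Finset.abs_prod, Finsupp.degree_apply,
      ← Finset.prod_pow_eq_pow_sum]
    exact Finset.prod_le_prod (fun _ _ ↦ abs_nonneg _) fun i _ ↦ by
      rw [abs_pow]
      exact pow_le_pow_left₀ (abs_nonneg _) (hv i) _
  simpa [aeval_eq_eval, eval_translateSubst, abs_mul, ← sub_eq_add_neg] using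
    mul_le_mul_of_nonneg_right abs_le (sq_nonneg (eval v q))

theorem apply_sq_nonneg_of_mem_cubeCone (hL : L ∈ cubeCone u δ D) {q : MvPolynomial σ ℝ}
    (hq : q ∈ restrictTotalDegree σ ℝ 1) : 0 ≤ L (q ^ 2) := by
  simpa using (abs_nonneg _).trans (hL 0 (by simp) q hq)

theorem abs_apply_X_sub_le_of_mem_cubeCone (hL : L ∈ cubeCone u δ D) (hD : 1 ≤ D)
    (h1 : L 1 = 1) (i : σ) : |L (X i) - u i| ≤ δ := by
  have := hL (.single i 1) (by simpa) 1 (by simp [mem_restrictTotalDegree])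
  change |L (translateSubst (-u) (X i) * 1 ^ 2)| ≤ _ at this
  simpa [linearMap_apply_C, h1, ← sub_eq_add_neg] using this

theorem abs_apply_homothetySubst_mul_sq_le (hL : L ∈ cubeCone u δ D) (hδ : 0 ≤ δ)
    (hv : ∀ i, |v i - u i| ≤ δ) (hs : s ∈ Icc (0 : ℝ) 1) {p q : MvPolynomial σ ℝ}
    (hp : p.totalDegree ≤ D) (hq : q ∈ restrictTotalDegree σ ℝ 1) :
    |L (homothetySubst v s p * q ^ 2)| ≤ weightedNorm δ (translateSubst u p) * L (q ^ 2) := by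
  obtain ⟨p', hp', hdeg, hnorm⟩ := exists_homothetySubst_eq hδ hv hs p
  calc |L (homothetySubst v s p * q ^ 2)|
      = |(L ∘ₗ LinearMap.mulRight ℝ (q ^ 2) ∘ₗ (translateSubst (-u)).toLinearMap) p'| := by
        simp [hp']
    _ ≤ weightedNorm δ p' * L (q ^ 2) :=
        abs_apply_le_weightedNorm_mul (fun m hm ↦ hL m hm q hq) (hdeg.trans hp)
    _ ≤ weightedNorm δ (translateSubst u p) * L (q ^ 2) := by
        gcongr
        exact apply_sq_nonneg_of_mem_cubeCone hL hq

end CubeCone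

section Concavity

theorem exists_forall_le_add_mul_of_isCompact {α : Type*} [TopologicalSpace α] {K : Set α}
    (hK : IsCompact K) {q l : α → ℝ} (hq : Continuous q) (hl : Continuous l) (hl_nonneg : 0 ≤ l)
    (h : ∀ x ∈ K, l x = 0 → 0 < q x) : ∃ M : ℝ, ∃ c > 0, ∀ x ∈ K, c ≤ q x + M * l x := by
  let U (m : ℕ) : Set α := {x | 1 / (m + 1 : ℝ) < q x + m * l x}
  have monotone_U : Monotone U := by
    intro m m' hm x (hx : 1 / (m + 1 : ℝ) < q x + m * l x)
    calc 1 / (m' + 1 : ℝ) ≤ 1 / (m + 1) := by gcongr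
      _ < q x + m * l x := hx
      _ ≤ q x + m' * l x := by gcongr; exact hl_nonneg x
  have subset_iUnion : K ⊆ ⋃ m, U m := by
    intro x hx
    rcases (hl_nonneg x).eq_or_lt with hl0 | hl0
    · obtain ⟨m, hm⟩ := exists_nat_one_div_lt (h x hx hl0.symm)
      exact mem_iUnion.2 ⟨m, show _ < q x + m * l x by
        rwa [← hl0, Pi.zero_apply, mul_zero, add_zero]⟩
    · obtain ⟨m, hm⟩ := exists_nat_gt ((1 - q x) / l x)
      have : 1 - q x < m * l x := (div_lt_iff₀ hl0).1 hm
      have : 1 / (m + 1 : ℝ) ≤ 1 := div_le_one_of_le₀ (by simp) (by positivity)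
      exact mem_iUnion.2 ⟨m, show _ < q x + m * l x by linarith⟩
  obtain ⟨m, hm⟩ := hK.elim_directed_cover U
    (fun m ↦ isOpen_lt continuous_const (hq.add (hl.const_mul _))) subset_iUnion
    monotone_U.directed_le
  exact ⟨m, 1 / (m + 1), by positivity, fun x hx ↦ (hm hx).le⟩

/-- Finsler's lemma. -/
theorem exists_posSemidef_add_smul_vecMulVec_sub {ι : Type*} [Fintype ι] [DecidableEq ι]
    {A : Matrix ι ι ℝ} (hA : A.IsHermitian) {a : ι → ℝ}
    (h : ∀ v ≠ 0, a ⬝ᵥ v = 0 → 0 < v ⬝ᵥ A.mulVec v) :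
    ∃ M : ℝ, ∃ c > (0 : ℝ), (A + M • Matrix.vecMulVec a a - c • (1 : Matrix ι ι ℝ)).PosSemidef := by
  let q (x : EuclideanSpace ℝ ι) : ℝ := x.ofLp ⬝ᵥ A.mulVec x.ofLp
  let l (x : EuclideanSpace ℝ ι) : ℝ := (a ⬝ᵥ x.ofLp) ^ 2
  obtain ⟨M, c, hc, hM⟩ := exists_forall_le_add_mul_of_isCompact
    (isCompact_sphere (0 : EuclideanSpace ℝ ι) 1) (q := q) (l := l) (by fun_prop) (by fun_prop)
    (fun x ↦ sq_nonneg _) fun x hx hl ↦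
      h _ (by simpa using ne_zero_of_mem_unit_sphere ⟨x, hx⟩) (pow_eq_zero_iff two_ne_zero |>.1 hl)
  have homogeneous (x : EuclideanSpace ℝ ι) : c * ‖x‖ ^ 2 ≤ q x + M * l x := by
    rcases eq_or_ne x 0 with rfl | hx
    · simp [q, l]
    have hx' : 0 < ‖x‖ := norm_pos_iff.2 hx
    have := hM (‖x‖⁻¹ • x) (by simp [norm_smul, hx'.ne'])
    simp only [q, l, WithLp.ofLp_smul, Matrix.mulVec_smul, smul_dotProduct, dotProduct_smul,
      smul_eq_mul] at this ⊢
    field_simp at this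
    linarith
  refine ⟨M, c, hc, .of_dotProduct_mulVec_nonneg ?_ fun w ↦ ?_⟩
  · refine (hA.add ?_).sub ?_
    · ext i j
      simp [Matrix.vecMulVec_apply, mul_comm]
    · ext i j
      simp [Matrix.one_apply, eq_comm]
  · have := homogeneous (WithLp.toLp 2 w)
    simp only [star_trivial, Matrix.sub_mulVec, Matrix.add_mulVec, Matrix.smul_mulVec,
      Matrix.one_mulVec, Matrix.vecMulVec_mulVec, dotProduct_sub, dotProduct_add, dotProduct_smul,
      smul_eq_mul, op_smul_eq_smul, dotProduct_comm w a]
    simp only [q, l, EuclideanSpace.real_norm_sq_eq] at this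
    rw [show w ⬝ᵥ w = ∑ i, w i ^ 2 by simp only [dotProduct, sq]]
    linarith

variable {A : Type*} [CommRing A] [Algebra ℝ A] {L : A →ₗ[ℝ] ℝ} {Q : Submodule ℝ A}

theorem sum_sum_mul_apply_mul_nonneg {ι : Type*} [Fintype ι] {M : Matrix ι ι ℝ}
    (hM : M.PosSemidef) (hL : ∀ q ∈ Q, 0 ≤ L (q ^ 2)) {w : ι → A} (hw : ∀ i, w i ∈ Q) :
    0 ≤ ∑ i, ∑ j, M i j * L (w i * w j) := by
  obtain ⟨m, b, rfl⟩ := Matrix.posSemidef_iff_eq_sum_vecMulVec.1 hM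
  calc 0 ≤ ∑ k, L ((∑ i, b k i • w i) ^ 2) :=
        Finset.sum_nonneg fun k _ ↦ hL _ (Q.sum_mem fun i _ ↦ Q.smul_mem _ (hw i))
    _ = ∑ k, ∑ i, ∑ j, b k i * b k j * L (w i * w j) := by
        simp only [sq, Finset.sum_mul_sum, smul_mul_smul_comm, map_sum, map_smul, smul_eq_mul]
    _ = ∑ i, ∑ j, (∑ k, Matrix.vecMulVec (b k) (star (b k))) i j * L (w i * w j) := by
        simp only [Matrix.sum_apply, Matrix.vecMulVec_apply, star_trivial,
          Finset.sum_mul]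
        exact Finset.sum_comm_cycle.symm

theorem abs_apply_mul_mul_le {p a b : A} {ε : ℝ}
    (h : ∀ q ∈ Q, |L (p * q ^ 2)| ≤ ε * L (q ^ 2)) (ha : a ∈ Q) (hb : b ∈ Q) :
    |L (p * (a * b))| ≤ ε * ((L (a ^ 2) + L (b ^ 2)) / 2) := by
  have polarization : 4 * L (p * (a * b)) = L (p * (a + b) ^ 2) - L (p * (a - b) ^ 2) := by
    rw [← map_sub, ← smul_eq_mul, ← map_smul, Algebra.smul_def, map_ofNat]
    congr 1
    ring
  have parallelogram : L ((a + b) ^ 2) + L ((a - b) ^ 2) = 2 * (L (a ^ 2) + L (b ^ 2)) := by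
    rw [← map_add, ← map_add, ← smul_eq_mul, ← map_smul, Algebra.smul_def, map_ofNat]
    congr 1
    ring
  have hadd := h _ (Q.add_mem ha hb)
  have hsub := h _ (Q.sub_mem ha hb)
  have scaled := congrArg (ε * ·) parallelogram
  rw [abs_le] at *
  constructor <;> linarith

theorem apply_radialHessian_nonpos {σ : Type*} [Fintype σ] [DecidableEq σ] {u v : σ → ℝ}
    {δ s c ε : ℝ} {D : ℕ} {L : MvPolynomial σ ℝ →ₗ[ℝ] ℝ} {g : MvPolynomial σ ℝ} {H : Matrix σ σ ℝ}
    (hL : L ∈ cubeCone u δ D) (hδ : 0 ≤ δ) (hv : ∀ i, |v i - u i| ≤ δ) (hs : s ∈ Icc (0 : ℝ) 1)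
    (hH : (-H - c • 1).PosSemidef) (hε : Fintype.card σ * ε ≤ c)
    (hdeg : ∀ i j, (pderiv i (pderiv j g) - C (H i j)).totalDegree ≤ D)
    (hnorm : ∀ i j, weightedNorm δ (translateSubst u (pderiv i (pderiv j g) - C (H i j))) ≤ ε) :
    L (radialHessian v s g) ≤ 0 := by
  let w (i : σ) : MvPolynomial σ ℝ := X i - C (v i)
  let r (i j : σ) : MvPolynomial σ ℝ := homothetySubst v s (pderiv i (pderiv j g) - C (H i j))
  have hw (i : σ) : w i ∈ restrictTotalDegree σ ℝ 1 :=
    (mem_restrictTotalDegree _ _ _).2 (totalDegree_X_sub_C_le i (v i))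
  have apply_sq_nonneg (q) (hq : q ∈ restrictTotalDegree σ ℝ 1) : 0 ≤ L (q ^ 2) :=
    apply_sq_nonneg_of_mem_cubeCone hL hq
  have split : L (radialHessian v s g) =
      ∑ i, ∑ j, H i j * L (w i * w j) + ∑ i, ∑ j, L (r i j * (w i * w j)) := by
    simp only [← Finset.sum_add_distrib, radialHessian, map_sum]
    refine Finset.sum_congr rfl fun i _ ↦ Finset.sum_congr rfl fun j _ ↦ ?_
    rw [← smul_eq_mul (H i j), ← map_smul, ← map_add, smul_eq_C_mul]
    simp only [r, w, map_sub, ← algebraMap_eq, AlgHom.commutes]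
    ring_nf
  have main : ∑ i, ∑ j, H i j * L (w i * w j) ≤ -c * ∑ i, L (w i ^ 2) := by
    have := sum_sum_mul_apply_mul_nonneg hH apply_sq_nonneg hw
    simp only [Matrix.sub_apply, Matrix.neg_apply, Matrix.smul_apply, Matrix.one_apply,
      smul_eq_mul, mul_ite, mul_one, mul_zero, sub_mul, neg_mul, ite_mul, zero_mul,
      Finset.sum_sub_distrib, Finset.sum_neg_distrib, Finset.sum_ite_eq, Finset.mem_univ,
      ↓reduceIte, ← sq, ← Finset.mul_sum] at this
    linarith
  have error : ∑ i, ∑ j, L (r i j * (w i * w j)) ≤ Fintype.card σ * ε * ∑ i, L (w i ^ 2) := by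
    calc _ ≤ ∑ i, ∑ j, ε * ((L (w i ^ 2) + L (w j ^ 2)) / 2) := by
            refine Finset.sum_le_sum fun i _ ↦ Finset.sum_le_sum fun j _ ↦
              (le_abs_self _).trans (abs_apply_mul_mul_le (fun q hq ↦ ?_) (hw i) (hw j))
            exact (abs_apply_homothetySubst_mul_sq_le hL hδ hv hs (hdeg i j) hq).trans
              (mul_le_mul_of_nonneg_right (hnorm i j) (apply_sq_nonneg q hq))
      _ = _ := by
        simp only [← Finset.mul_sum, ← Finset.sum_div, Finset.sum_add_distrib, Finset.sum_const,
          Finset.card_univ, nsmul_eq_mul]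
        ring
  nlinarith [Finset.sum_nonneg fun i (_ : i ∈ Finset.univ) ↦ apply_sq_nonneg _ (hw i)]

end Concavity

section Cube

variable {n : ℕ}

/-- The cube with centre `u` and half side `δ`. -/
def cube (u : Rn n) (δ : ℝ) : Set (Rn n) :=
  {x | ∀ i, |x i - u i| ≤ δ}

theorem cube_eq_preimage (u : Rn n) (δ : ℝ) :
    cube u δ = PiLp.homeomorph 2 (fun _ : Fin n ↦ ℝ) ⁻¹' univ.pi fun i ↦ closedBall (u i) δ := by
  ext x
  simp only [cube, mem_ofPred_eq, mem_preimage, mem_univ_pi, mem_closedBall, Real.dist_eq]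
  rfl

theorem isCompact_cube (u : Rn n) (δ : ℝ) : IsCompact (cube u δ) := by
  rw [cube_eq_preimage, Homeomorph.isCompact_preimage]
  exact isCompact_univ_pi fun i ↦ isCompact_closedBall (u i) δ

theorem cube_mem_nhds (u : Rn n) {δ : ℝ} (hδ : 0 < δ) : cube u δ ∈ nhds u := by
  rw [cube_eq_preimage]
  exact (PiLp.homeomorph 2 _).continuous.continuousAt
    (set_pi_mem_nhds finite_univ fun i _ ↦ closedBall_mem_nhds (u i) hδ)

theorem eventually_cube_subset {u : Rn n} {U : Set (Rn n)} (hU : U ∈ nhds u) :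
    ∀ᶠ δ in nhdsWithin (0 : ℝ) (Ioi 0), cube u δ ⊆ U := by
  rw [← (PiLp.homeomorph 2 _).symm_apply_apply u] at hU
  obtain ⟨ε, hε, hεU⟩ := nhds_basis_closedBall.mem_iff.1
    ((PiLp.homeomorph 2 _).symm.continuous.continuousAt hU)
  filter_upwards [Ioo_mem_nhdsGT hε] with δ hδ x hx
  exact hεU ((dist_pi_le_iff hε.le).2 fun i ↦ (hx i).trans hδ.2.le)

theorem hasSpectrahedralLift_cube (u : Rn n) (δ : ℝ) : HasSpectrahedralLift (cube u δ) := by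
  let coord (i : Fin n) : Rn n →ₗ[ℝ] ℝ := (EuclideanSpace.proj (𝕜 := ℝ) i).toLinearMap
  have cube_eq : cube u δ =
      ⋂ i, {x | coord i x ≤ u i + δ} ∩ {x | (-coord i) x ≤ δ - u i} := by
    ext x
    simp only [cube, mem_ofPred_eq, mem_iInter, mem_inter_iff, abs_sub_le_iff, LinearMap.neg_apply]
    refine forall_congr' fun i ↦ and_congr sub_le_iff_le_add' ?_
    rw [sub_le_iff_le_add, neg_le, neg_sub, sub_le_iff_le_add']
    exact Iff.rfl
  rw [cube_eq]
  exact .iInter fun i ↦ (HasSpectrahedralLift.halfspace _ _).inter (.halfspace _ _)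

end Cube

section LocalLift

variable {n : ℕ} {f g : MvPolynomial (Fin n) ℝ} {u : Rn n}

theorem eventually_weightedNorm_translateSubst_le {σ : Type*} {u : σ → ℝ} {p : MvPolynomial σ ℝ}
    (hp : eval u p = 0) {ε : ℝ} (hε : 0 < ε) :
    ∀ᶠ δ in nhdsWithin (0 : ℝ) (Ioi 0), weightedNorm δ (translateSubst u p) ≤ ε := by
  have tendsto := ((continuous_weightedNorm (translateSubst u p)).tendsto 0).mono_left
    (nhdsWithin_le_nhds (s := Ioi 0))
  rw [weightedNorm_zero_left, coeff_zero_translateSubst, hp, abs_zero] at tendsto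
  exact tendsto.eventually_le_const hε

theorem eventually_hasSpectrahedralLift_of_posSemidef {c : ℝ} (hc : 0 < c)
    (hess : (-phess g u - c • (1 : Matrix (Fin n) (Fin n) ℝ)).PosSemidef) :
    ∀ᶠ δ in nhdsWithin (0 : ℝ) (Ioi 0), HasSpectrahedralLift (cube u δ ∩ {x | 0 ≤ peval g x}) := by
  let r (i j : Fin n) : MvPolynomial (Fin n) ℝ := pderiv i (pderiv j g) - C (phess g u i j)
  have norm_le : ∀ᶠ δ in nhdsWithin (0 : ℝ) (Ioi 0), ∀ i j,
      weightedNorm δ (translateSubst (fun k ↦ u k) (r i j)) ≤ c / (n + 1) :=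
    eventually_all.2 fun i ↦ eventually_all.2 fun j ↦
      eventually_weightedNorm_translateSubst_le (by simp [r, phess]) (by positivity)
  obtain ⟨D, hD⟩ : ∃ D, ∀ i j, (r i j).totalDegree ≤ D :=
    (finite_range fun p : Fin n × Fin n ↦ (r p.1 p.2).totalDegree).bddAbove.imp
      fun D hD i j ↦ hD ⟨(i, j), rfl⟩
  filter_upwards [norm_le, self_mem_nhdsWithin] with δ hnorm (hδ : 0 < δ)
  have barycenter_mem {L : MvPolynomial (Fin n) ℝ →ₗ[ℝ] ℝ}
      (hL : L ∈ cubeCone (fun i ↦ u i) δ (D + 1)) (h1 : L 1 = 1) : barycenter L ∈ cube u δ :=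
    fun i ↦ by simpa using abs_apply_X_sub_le_of_mem_cubeCone hL (by simp) h1 i
  refine .of_moments (isSpectrahedralCone_cubeCone (fun i ↦ u i) δ (D + 1))
    (fun x hx ↦ aeval_mem_cubeCone hx _) (fun L hL h1 ↦ barycenter_mem hL h1)
    fun L hL h1 s hs ↦ apply_radialHessian_nonpos hL hδ.le (barycenter_mem hL h1)
      ⟨hs.1.le, hs.2.le⟩ hess ?_ (fun i j ↦ (hD i j).trans (Nat.le_succ D)) hnorm
  rw [Fintype.card_fin, ← mul_div_assoc, div_le_iff₀ (by positivity)]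
  linarith

theorem continuous_peval (f : MvPolynomial (Fin n) ℝ) : Continuous (peval f) :=
  (continuous_eval f).comp (by fun_prop)

theorem pderiv_comm {σ R : Type*} [CommRing R] (i j : σ) (p : MvPolynomial σ R) :
    pderiv i (pderiv j p) = pderiv j (pderiv i p) := by
  classical
  have commutator_eq_zero : ⁅pderiv (R := R) i, pderiv j⁆ = 0 :=
    derivation_ext fun k ↦ by
      rw [Derivation.commutator_apply]
      simp [pderiv_X, Pi.single_apply, apply_ite]
  have := congr($commutator_eq_zero p)
  rwa [Derivation.commutator_apply, Derivation.zero_apply, sub_eq_zero] at this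

theorem isHermitian_phess (f : MvPolynomial (Fin n) ℝ) (u : Rn n) : (phess f u).IsHermitian :=
  Matrix.IsHermitian.ext fun i j ↦ congrArg (eval fun k ↦ u k) (pderiv_comm j i f)

theorem StrictlyQuasiConcaveAt.pos_of_dotProduct_eq_zero (h : StrictlyQuasiConcaveAt f u)
    {v : Fin n → ℝ} (hv : v ≠ 0) (hgrad : pgrad f u ⬝ᵥ v = 0) :
    0 < v ⬝ᵥ (-phess f u).mulVec v := by
  rcases h with ⟨_, h⟩ | ⟨_, h⟩
  · have hpos := h v hv hgrad
    rw [Matrix.neg_mulVec, dotProduct_neg]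
    simpa only [dotProduct, Matrix.mulVec, Finset.mul_sum, ← mul_assoc] using hpos
  · simpa using h.dotProduct_mulVec_pos hv

theorem phess_sub_C_mul_sq (hf : peval f u = 0) (M : ℝ) :
    phess (f - C (M / 2) * f ^ 2) u = phess f u - M • Matrix.vecMulVec (pgrad f u) (pgrad f u) := by
  ext i j
  change eval (fun k ↦ u k) f = 0 at hf
  simp [phess, pgrad, sq, hf, Matrix.vecMulVec_apply]
  ring

/-- Replacing `f` by `f (1 - M f / 2)` does not change the sign of `f` near its zero `u`, and makes
the Hessian negative definite at `u`. -/
theorem StrictlyQuasiConcaveAt.eventually_hasSpectrahedralLift (hf : peval f u = 0)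
    (h : StrictlyQuasiConcaveAt f u) :
    ∀ᶠ δ in nhdsWithin (0 : ℝ) (Ioi 0), HasSpectrahedralLift (cube u δ ∩ {x | 0 ≤ peval f x}) := by
  obtain ⟨M, c, hc, hM⟩ := exists_posSemidef_add_smul_vecMulVec_sub (isHermitian_phess f u).neg
    fun v hv ↦ h.pos_of_dotProduct_eq_zero hv
  let g := f - C (M / 2) * f ^ 2
  have peval_g (x : Rn n) : peval g x = peval f x * (1 - M / 2 * peval f x) := by
    simp only [peval, g, map_sub, map_mul, map_pow, eval_C]
    ring
  have hess : (-phess g u - c • (1 : Matrix (Fin n) (Fin n) ℝ)).PosSemidef := by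
    rwa [phess_sub_C_mul_sq hf, neg_sub', sub_neg_eq_add]
  have near_u : {x | M / 2 * peval f x < 1} ∈ nhds u :=
    (isOpen_lt ((continuous_peval f).const_mul _) continuous_const).mem_nhds (by simp [hf])
  filter_upwards [eventually_hasSpectrahedralLift_of_posSemidef hc hess,
    eventually_cube_subset near_u] with δ hlift hδ
  convert hlift using 1
  ext x
  refine and_congr_right fun hx ↦ ?_
  have : M / 2 * peval f x < 1 := hδ hx
  rw [mem_ofPred_eq, mem_ofPred_eq, peval_g, mul_nonneg_iff_of_pos_right (by linarith)]

theorem eventually_hasSpectrahedralLift_cube_inter_nonneg (hf : 0 ≤ peval f u)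
    (h : peval f u = 0 → SosConcave f ∨ StrictlyQuasiConcaveAt f u) :
    ∀ᶠ δ in nhdsWithin (0 : ℝ) (Ioi 0), HasSpectrahedralLift (cube u δ ∩ {x | 0 ≤ peval f x}) := by
  rcases hf.eq_or_lt with hf | hf
  · rcases h hf.symm with h | h
    · exact .of_forall fun δ ↦ (hasSpectrahedralLift_cube u δ).inter h.hasSpectrahedralLift
    · exact h.eventually_hasSpectrahedralLift hf.symm
  · have near_u : {x | 0 ≤ peval f x} ∈ nhds u :=
      (continuous_peval f).continuousAt.eventually_const_le hf
    filter_upwards [eventually_cube_subset near_u] with δ hδ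
    rw [inter_eq_left.2 hδ]
    exact hasSpectrahedralLift_cube u δ

theorem isClosed_forall_nonneg_peval {ι : Type*} (f : ι → MvPolynomial (Fin n) ℝ) :
    IsClosed {x : Rn n | ∀ i, 0 ≤ peval (f i) x} := by
  simp only [ofPred_forall]
  exact isClosed_iInter fun i ↦ isClosed_le continuous_const (continuous_peval (f i))

theorem eventually_hasSpectrahedralLift_cube_inter_forall_nonneg {ι : Type*} [Finite ι]
    {f : ι → MvPolynomial (Fin n) ℝ}
    (h : (∀ i, 0 ≤ peval (f i) u) →
      ∀ i, peval (f i) u = 0 → SosConcave (f i) ∨ StrictlyQuasiConcaveAt (f i) u) :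
    ∀ᶠ δ in nhdsWithin (0 : ℝ) (Ioi 0),
      HasSpectrahedralLift (cube u δ ∩ {x | ∀ i, 0 ≤ peval (f i) x}) := by
  by_cases hu : ∀ i, 0 ≤ peval (f i) u
  · filter_upwards [eventually_all.2 fun i ↦
      eventually_hasSpectrahedralLift_cube_inter_nonneg (hu i) (h hu i)] with δ hδ
    convert (hasSpectrahedralLift_cube u δ).inter (.iInter hδ) using 1
    ext x
    simp only [mem_inter_iff, mem_iInter, mem_ofPred_eq]
    exact ⟨fun hx ↦ ⟨hx.1, fun i ↦ ⟨hx.1, hx.2 i⟩⟩, fun hx ↦ ⟨hx.1, fun i ↦ (hx.2 i).2⟩⟩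
  · have near_u := (isClosed_forall_nonneg_peval f).isOpen_compl.mem_nhds hu
    filter_upwards [eventually_cube_subset near_u] with δ hδ
    rw [(disjoint_left.2 hδ).inter_eq]
    exact .empty

end LocalLift

section ConvexBoundary

variable {n : ℕ} {T : Set (Rn n)}

theorem mem_convexBoundary_iff_inner {u : Rn n} : u ∈ convexBoundary T ↔
    u ∈ T ∧ ∃ l : Rn n, ‖l‖ = 1 ∧ ∀ x ∈ T, inner ℝ l u ≤ inner ℝ l x := by
  simp only [convexBoundary, mem_ofPred_eq, PiLp.inner_apply, RCLike.inner_apply', conj_trivial]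

theorem isCompact_convexBoundary (hT : IsCompact T) : IsCompact (convexBoundary T) := by
  have closed : IsClosed {p : Rn n × Rn n | ∀ x ∈ T, inner ℝ p.2 p.1 ≤ inner ℝ p.2 x} := by
    simp only [ofPred_forall]
    exact isClosed_biInter fun x _ ↦ isClosed_le (by fun_prop) (by fun_prop)
  convert ((hT.prod (isCompact_sphere 0 1)).inter_right closed).image continuous_fst using 1
  ext u
  simp [mem_convexBoundary_iff_inner, and_assoc]

theorem exists_mem_convexBoundary_forall_inner_le (hT : IsCompact T) (hne : T.Nonempty) {l : Rn n}
    (hl : l ≠ 0) : ∃ u ∈ convexBoundary T, ∀ x ∈ T, inner ℝ l u ≤ inner ℝ l x := by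
  obtain ⟨u, hu, hmin : ∀ x ∈ T, inner ℝ l u ≤ inner ℝ l x⟩ :=
    hT.exists_isMinOn hne (f := fun x ↦ inner ℝ l x) (by fun_prop)
  refine ⟨u, mem_convexBoundary_iff_inner.2 ⟨hu, ‖l‖⁻¹ • l, norm_smul_inv_norm hl, ?_⟩, hmin⟩
  intro x hx
  simp only [real_inner_smul_left]
  exact mul_le_mul_of_nonneg_left (hmin x hx) (by positivity)

theorem subset_of_convexBoundary_subset [Nontrivial (Rn n)] {K : Set (Rn n)} (hT : IsCompact T)
    (hK_closed : IsClosed K) (hK_convex : Convex ℝ K) (h : convexBoundary T ⊆ K) : T ⊆ K := by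
  intro x hx
  by_contra hxK
  obtain ⟨φ, s, hφx, hφK⟩ := geometric_hahn_banach_point_closed hK_convex hK_closed hxK
  obtain ⟨l, rfl⟩ := (InnerProductSpace.toDual ℝ (Rn n)).surjective φ
  rcases eq_or_ne l 0 with rfl | hl
  · obtain ⟨l', hl'⟩ := exists_ne (0 : Rn n)
    obtain ⟨u, hu, -⟩ := exists_mem_convexBoundary_forall_inner_le hT ⟨x, hx⟩ hl'
    exact (hφx.trans (hφK u (h hu))).ne (by simp)
  · obtain ⟨u, hu, hmin⟩ := exists_mem_convexBoundary_forall_inner_le hT ⟨x, hx⟩ hl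
    exact (hφx.trans (hφK u (h hu))).not_ge (hmin x hx)

theorem convexHull_eq_of_convexBoundary_subset [Nontrivial (Rn n)] {S : Set (Rn n)}
    (hT : IsCompact T) (hS : IsCompact (convexHull ℝ S)) (hST : S ⊆ T)
    (h : convexBoundary T ⊆ S) : convexHull ℝ T = convexHull ℝ S :=
  (convexHull_min (subset_of_convexBoundary_subset hT hS.isClosed (convex_convexHull ℝ S)
    (h.trans (subset_convexHull ℝ S))) (convex_convexHull ℝ S)).antisymm (convexHull_mono hST)

theorem HasSpectrahedralLift.convexHull_iUnion_of_local {κ : Type*} [Finite κ] {T : κ → Set (Rn n)}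
    (hT : IsCompact (⋃ k, T k)) (hT_closed : ∀ k, IsClosed (T k))
    (hlocal : ∀ u ∈ convexBoundary (⋃ k, T k),
      ∃ U ∈ nhds u, IsCompact U ∧ ∀ k, HasSpectrahedralLift (U ∩ T k)) :
    HasSpectrahedralLift (convexHull ℝ (⋃ k, T k)) := by
  rcases subsingleton_or_nontrivial (Rn n) with _ | _
  · exact .of_subsingleton _
  choose! U hU hU_compact hlift using hlocal
  obtain ⟨t, ht, hcover⟩ := (isCompact_convexBoundary hT).elim_nhds_subcover U hU
  let piece (p : Rn n × κ) : Set (Rn n) := U p.1 ∩ T p.2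
  let s : Set (Rn n × κ) := t ×ˢ Set.univ
  have hs : s.Finite := t.finite_toSet.prod finite_univ
  have lift_piece : ∀ p ∈ s, HasSpectrahedralLift (piece p) :=
    fun p hp ↦ hlift p.1 (ht p.1 hp.1) p.2
  have compact_piece : ∀ p ∈ s, IsCompact (piece p) :=
    fun p hp ↦ (hU_compact p.1 (ht p.1 hp.1)).inter_right (hT_closed p.2)
  have boundary_subset : convexBoundary (⋃ k, T k) ⊆ ⋃ p ∈ s, piece p := by
    intro x hx
    obtain ⟨u, hu, hxu⟩ := mem_iUnion₂.1 (hcover hx)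
    obtain ⟨k, hk⟩ := mem_iUnion.1 hx.1
    exact mem_iUnion₂.2 ⟨(u, k), ⟨hu, mem_univ k⟩, hxu, hk⟩
  rw [convexHull_eq_of_convexBoundary_subset hT
    (isCompact_convexHull_biUnion hs compact_piece fun p hp ↦ (lift_piece p hp).convex)
    (iUnion₂_subset fun p _ ↦ inter_subset_right.trans (subset_iUnion T p.2)) boundary_subset]
  exact .convexHull_biUnion hs lift_piece fun p hp ↦ (compact_piece p hp).isBounded

end ConvexBoundary

theorem isSDPRepresentable_convexHull_union_basic_general {n : ℕ} {κ : Type*} [Finite κ]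
    {ι : κ → Type*} [∀ k, Finite (ι k)] (f : ∀ k, ι k → MvPolynomial (Fin n) ℝ)
    (hcpt : IsCompact (⋃ k, {x : Rn n | ∀ i, 0 ≤ peval (f k i) x}))
    (h : ∀ u ∈ convexBoundary (⋃ k, {x : Rn n | ∀ i, 0 ≤ peval (f k i) x}), ∀ k,
      (∀ i, 0 ≤ peval (f k i) u) → ∀ i, peval (f k i) u = 0 →
        SosConcave (f k i) ∨ StrictlyQuasiConcaveAt (f k i) u) :
    IsSDPRepresentable (convexHull ℝ (⋃ k, {x : Rn n | ∀ i, 0 ≤ peval (f k i) x})) := by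
  refine (HasSpectrahedralLift.convexHull_iUnion_of_local hcpt
    (fun k ↦ isClosed_forall_nonneg_peval (f k)) fun u hu ↦ ?_).isSDPRepresentable
  obtain ⟨δ, hδ, hlift⟩ := ((eventually_all.2 fun k ↦
    eventually_hasSpectrahedralLift_cube_inter_forall_nonneg (h u hu k)).and
      self_mem_nhdsWithin).exists.imp fun _ ↦ And.symm
  exact ⟨cube u δ, cube_mem_nhds u hδ, isCompact_cube u δ, hlift⟩

/-- sufficient conditions for SDP representability of the convex hull
of a compact union of basic closed semialgebraic sets. -/
theorem isSDPRepresentable_convexHull_union_basic {n L : ℕ}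
    (mk : Fin L → ℕ) (f : ∀ k, Fin (mk k) → MvPolynomial (Fin n) ℝ)
    (T : Fin L → Set (Rn n))
    (hT : ∀ k, T k = {x : Rn n | ∀ i, 0 ≤ peval (f k i) x})
    (Tun : Set (Rn n)) (hTun : Tun = ⋃ k, T k) (hcpt : IsCompact Tun)
    (h : ∀ u ∈ convexBoundary Tun, ∀ (k : Fin L) (i : Fin (mk k)), peval (f k i) u = 0 →
      (∀ δ > 0, ∃ v ∈ ball u δ, ∀ j, 0 < peval (f k j) v) ∧
      (SosConcave (f k i) ∨ StrictlyQuasiConcaveAt (f k i) u)) :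
    IsSDPRepresentable (convexHull ℝ Tun) := by
  obtain rfl := funext hT
  subst hTun
  exact isSDPRepresentable_convexHull_union_basic_general f hcpt
    fun u hu k _ i hi ↦ (h u hu k i hi).2
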